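/- Let q be a prime power and r ≥ 2. Let f ∈ F_{q^r}[x] be a polynomial having at least one root in F_{q^r}, let b ∈ F_{q^r} with b ≠ 0, and let g ∈ F_{q^r}[x]. Then the support of the evaluation vector ev(b·y − g(x)) at the affine F_{q^r}-rational points of the Norm-Trace curve N_{q,r} is NOT contained in the support of ev(f(x)); equivalently, there exists an affine F_{q^r}-rational point (x₀, y₀) of N_{q,r} with f(x₀) = 0 but b·y₀ ≠ g(x₀). -/

import Mathlib

/-!
Let `K ⊆ F` be the subfield with `q` elements. The two sides of the curve equation are the norm
and the trace of `F / K`. Hence the points of the curve above any `t` form a fibre of the trace,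
which is a surjective `K`-linear map from a space of dimension `r > 1` onto `K`; so this fibre is a
translate of a nonzero subspace and cannot consist of the single ordinate `g(t) / b`. Take for `t`
a root of `f`.
-/

theorem exists_map_eq_and_ne_of_surjective_of_not_injective {H A B : Type*} [AddGroup A]
    [AddGroup B] [FunLike H A B] [AddMonoidHomClass H A B] {φ : H}
    (hsurj : Function.Surjective φ) (hinj : ¬ Function.Injective φ) (c : B) (w : A) :
    ∃ y, φ y = c ∧ y ≠ w := by
  obtain ⟨v, rfl⟩ := hsurj c
  obtain ⟨u, hu, hu_ne⟩ : ∃ u, φ u = 0 ∧ u ≠ 0 := by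
    simpa only [injective_iff_map_eq_zero, not_forall, exists_prop] using hinj
  by_cases hv : v = w
  · exact ⟨v + u, by rw [map_add, hu, add_zero], by simpa [hv] using hu_ne⟩
  · exact ⟨v, rfl, hv⟩

theorem exists_trace_eq_and_ne {K L : Type*} [Field K] [Field L] [Algebra K L]
    [Algebra.IsSeparable K L] (h : 1 < Module.finrank K L) (c : K) (w : L) :
    ∃ y, Algebra.trace K L y = c ∧ y ≠ w := by
  have := Module.finite_of_finrank_pos (zero_lt_one.trans h)
  have hinj : ¬ Function.Injective (Algebra.trace K L) := fun hinj ↦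
    h.not_ge <| (LinearMap.finrank_le_finrank_of_injective hinj).trans_eq (Module.finrank_self K)
  exact exists_map_eq_and_ne_of_surjective_of_not_injective (Algebra.trace_surjective K L) hinj c w

theorem exists_normTrace_point_ne {K L : Type*} [Field K] [Field L] [Finite L] [Algebra K L]
    (h : 1 < Module.finrank K L) (t w : L) :
    ∃ y, t ^ ((Nat.card L - 1) / (Nat.card K - 1)) =
      ∑ i ∈ Finset.range (Module.finrank K L), y ^ Nat.card K ^ i ∧ y ≠ w := by
  obtain ⟨y, hy, hyw⟩ := exists_trace_eq_and_ne h (Algebra.norm K t) w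
  refine ⟨y, ?_, hyw⟩
  rw [← FiniteField.algebraMap_norm_eq_pow, ← FiniteField.algebraMap_trace_eq_sum_pow, hy]

theorem finrank_eq_of_natCard_eq_pow {K V : Type*} [DivisionRing K] [Finite K] [AddCommGroup V]
    [Module K V] [Module.Finite K V] {n : ℕ} (h : Nat.card V = Nat.card K ^ n) :
    Module.finrank K V = n :=
  Nat.pow_right_injective Finite.one_lt_card (Module.natCard_eq_pow_finrank.symm.trans h)

theorem nonempty_ringHom_of_natCard_eq_pow {K L : Type*} [Field K] [Finite K] [Field L] [Finite L]
    {r : ℕ} (h : Nat.card L = Nat.card K ^ r) : Nonempty (K →+* L) := by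
  obtain ⟨p, _⟩ := CharP.exists K
  have : Fact p.Prime := ⟨CharP.char_is_prime K p⟩
  let : Algebra (ZMod p) K := ZMod.algebra K p
  have hcard : Nat.card L = p ^ (Module.finrank (ZMod p) K * r) := by
    rw [h, pow_mul, FiniteField.pow_finrank_eq_natCard]
  have := Fintype.ofFinite L
  have : CharP L p := charP_of_card_eq_prime_pow (Fintype.card_eq_nat_card.trans hcard)
  let : Algebra (ZMod p) L := ZMod.algebra L p
  have hfinrank : Module.finrank (ZMod p) L = Module.finrank (ZMod p) K * r :=
    finrank_eq_of_natCard_eq_pow (by rw [hcard, Nat.card_zmod])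
  exact (FiniteField.nonempty_algHom_of_finrank_dvd ⟨r, hfinrank⟩).map AlgHom.toRingHom

/-- If `f ∈ F_{q^r}[x]` has a root in `F_{q^r}` and `b ≠ 0`, then the support of
`ev(b·y − g(x))` is not contained in the support of `ev(f(x))`: there is an affine
`F_{q^r}`-rational point `(x₀, y₀)` of the Norm-Trace curve with `f(x₀) = 0` but
`b·y₀ ≠ g(x₀)`. -/
theorem stmt_17 (p m r : ℕ) (hp : p.Prime) (hm : 0 < m) (hr : 2 ≤ r)
    (q : ℕ) (hq : q = p ^ m)
    (F : Type) [Field F] [Fintype F] (hF : Fintype.card F = q ^ r)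
    (f g : Polynomial F) (b : F) (hb : b ≠ 0) (hroot : ∃ t : F, f.eval t = 0) :
    ∃ x₀ y₀ : F, x₀ ^ ((q ^ r - 1) / (q - 1)) = ∑ i ∈ Finset.range r, y₀ ^ q ^ i ∧
      f.eval x₀ = 0 ∧ b * y₀ ≠ g.eval x₀ := by
  have : Fact p.Prime := ⟨hp⟩
  let K := GaloisField p m
  have hK : Nat.card K = q := (GaloisField.card p m hm.ne').trans hq.symm
  have hL : Nat.card F = q ^ r := Nat.card_eq_fintype_card.trans hF
  have hcard : Nat.card F = Nat.card K ^ r := by rw [hK, hL]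
  obtain ⟨ι⟩ : Nonempty (K →+* F) := nonempty_ringHom_of_natCard_eq_pow hcard
  let : Algebra K F := ι.toAlgebra
  have hfinrank : Module.finrank K F = r := finrank_eq_of_natCard_eq_pow hcard
  obtain ⟨t, ht⟩ := hroot
  obtain ⟨y, hy, hy_ne⟩ := exists_normTrace_point_ne (K := K) (hfinrank ▸ hr) t (g.eval t / b)
  rw [hK, hL, hfinrank] at hy
  exact ⟨t, y, hy, ht, fun h ↦ hy_ne (eq_div_of_mul_eq hb ((mul_comm y b).trans h))⟩
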